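/- arXiv:2603.12536 — 2 statements merged into one kernel-verified Lean document; each statement's English description precedes it below -/
import Mathlib

section
/- For every x₀ ≠ 0 and every θ₀ ∈ ℝ there exists a smooth compactly supported function φ : ℝ → ℝ satisfying simultaneously: (i) ∫ φ(ε) dε = 0; (ii) ∫ ε·φ(ε) dε = 0; (iii) ∫ e^{ε·x₀}·φ(ε) dε ≠ 0; and (iv) ( ∫ ε·e^{ε·x₀}·φ(ε) dε ) / ( ∫ e^{ε·x₀}·φ(ε) dε ) ≠ θ₀. -/
/-!
Take `φ = ψ''` for a smooth bump `ψ ≥ 0`. Integrating by parts twice gives `∫ u ψ'' = ∫ u'' ψ`, so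
`φ` annihilates `1` and `t`, while `∫ exp (t x₀) φ = x₀² ∫ exp (t x₀) ψ ≠ 0`
(`exists_base_perturbation`).
Translating `φ` by `1` preserves these properties and shifts the ratio in the last condition by
exactly `1`, so `φ` or its translate has ratio different from `θ₀`.
-/

open Real MeasureTheory

lemma integral_mul_deriv_of_compactSupport {u v : ℝ → ℝ} (hu : ContDiff ℝ (⊤ : ℕ∞) u)
    (hv : ContDiff ℝ (⊤ : ℕ∞) v) (hc : HasCompactSupport v) :
    (∫ t : ℝ, u t * deriv v t) = -∫ t : ℝ, deriv u t * v t := by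
  have hu' : Continuous (deriv u) := hu.continuous_deriv (by simp)
  have hv' : Continuous (deriv v) := hv.continuous_deriv (by simp)
  exact integral_mul_deriv_eq_deriv_mul_of_integrable
    (fun t _ => (hu.differentiable (by simp) t).hasDerivAt)
    (fun t _ => (hv.differentiable (by simp) t).hasDerivAt)
    ((hu.continuous.mul hv').integrable_of_hasCompactSupport hc.deriv.mul_left)
    ((hu'.mul hv.continuous).integrable_of_hasCompactSupport hc.mul_left)
    ((hu.continuous.mul hv.continuous).integrable_of_hasCompactSupport hc.mul_left)

/-- A perturbation with vanishing zeroth and first moments and nonzero exponential moment: the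
second derivative of a bump function. -/
lemma exists_base_perturbation (x₀ : ℝ) (hx₀ : x₀ ≠ 0) :
    ∃ φ : ℝ → ℝ, ContDiff ℝ (⊤ : ℕ∞) φ ∧ HasCompactSupport φ ∧
      (∫ t : ℝ, φ t) = 0 ∧
      (∫ t : ℝ, t * φ t) = 0 ∧
      (∫ t : ℝ, Real.exp (t * x₀) * φ t) ≠ 0 := by
  let ψ : ContDiffBump (0 : ℝ) := ⟨1, 2, one_pos, one_lt_two⟩
  have h0 : ContDiff ℝ (⊤ : ℕ∞) ψ := ψ.contDiff
  have h1 : ContDiff ℝ (⊤ : ℕ∞) (deriv ψ) := (contDiff_infty_iff_deriv.1 h0).2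
  have h2 : ContDiff ℝ (⊤ : ℕ∞) (deriv (deriv ψ)) := (contDiff_infty_iff_deriv.1 h1).2
  have c0 : HasCompactSupport ψ := ψ.hasCompactSupport
  have hpos : 0 < ∫ t : ℝ, Real.exp (t * x₀) * ψ t := by
    refine Continuous.integral_pos_of_hasCompactSupport_nonneg_nonzero (x := 0)
      (by have := h0.continuous; fun_prop) c0.mul_left
      (fun t => mul_nonneg (Real.exp_pos _).le ψ.nonneg) ?_
    have : ψ 0 = 1 := ψ.one_of_mem_closedBall (by simp [ψ])
    simp [this]
  have hexp : ContDiff ℝ (⊤ : ℕ∞) (fun t : ℝ => Real.exp (t * x₀)) := by fun_prop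
  have hd : deriv (fun t : ℝ => Real.exp (t * x₀)) = fun t => x₀ * Real.exp (t * x₀) := by
    funext t
    have := ((hasDerivAt_id t).mul_const x₀).exp.deriv
    simpa [mul_comm] using this
  have int_deriv : ∀ v : ℝ → ℝ, ContDiff ℝ (⊤ : ℕ∞) v → HasCompactSupport v →
      (∫ t : ℝ, deriv v t) = 0 := by
    intro v hv hc
    simpa using integral_mul_deriv_of_compactSupport (u := fun _ => 1) contDiff_const hv hc
  refine ⟨deriv (deriv ψ), h2, c0.deriv.deriv, int_deriv _ h1 c0.deriv, ?_, ?_⟩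
  · have := integral_mul_deriv_of_compactSupport (u := fun t => t) contDiff_id h1 c0.deriv
    rw [this]
    simpa using int_deriv _ h0 c0
  · rw [integral_mul_deriv_of_compactSupport hexp h1 c0.deriv, hd]
    simp only [mul_assoc, integral_const_mul]
    rw [integral_mul_deriv_of_compactSupport hexp h0 c0, hd]
    simp only [mul_assoc, integral_const_mul]
    simp [hx₀, hpos.ne']

/-- existence of the moment-matching perturbation. For every `x₀ ≠ 0`
and every `θ₀ ∈ ℝ` there is a smooth compactly supported `φ : ℝ → ℝ` with
`∫ φ = 0`, `∫ ε φ(ε) dε = 0`, `∫ e^{ε x₀} φ(ε) dε ≠ 0`, and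
`(∫ ε e^{ε x₀} φ(ε) dε) / (∫ e^{ε x₀} φ(ε) dε) ≠ θ₀`. -/
theorem stmt13 (x₀ : ℝ) (hx₀ : x₀ ≠ 0) (θ₀ : ℝ) :
    ∃ φ : ℝ → ℝ, ContDiff ℝ (⊤ : ℕ∞) φ ∧ HasCompactSupport φ ∧
      (∫ t : ℝ, φ t) = 0 ∧
      (∫ t : ℝ, t * φ t) = 0 ∧
      (∫ t : ℝ, Real.exp (t * x₀) * φ t) ≠ 0 ∧
      (∫ t : ℝ, t * Real.exp (t * x₀) * φ t) / (∫ t : ℝ, Real.exp (t * x₀) * φ t) ≠ θ₀ := by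
  obtain ⟨φ, hφ, hc, i0, i1, i2⟩ := exists_base_perturbation x₀ hx₀
  by_cases h : (∫ t : ℝ, t * Real.exp (t * x₀) * φ t) / (∫ t : ℝ, Real.exp (t * x₀) * φ t) = θ₀
  swap
  · exact ⟨φ, hφ, hc, i0, i1, i2, h⟩
  have hcont := hφ.continuous
  have hint : ∀ g : ℝ → ℝ, Continuous g → Integrable (fun t => g t * φ t) := fun g hg =>
    (hg.mul hcont).integrable_of_hasCompactSupport hc.mul_left
  have shift : ∀ g : ℝ → ℝ, (∫ t : ℝ, g t * φ (t - 1)) = ∫ t : ℝ, g (t + 1) * φ t := by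
    intro g
    simpa using integral_sub_right_eq_self (μ := volume) (fun t => g (t + 1) * φ t) (1 : ℝ)
  have e2 : (∫ t : ℝ, Real.exp (t * x₀) * φ (t - 1))
      = Real.exp x₀ * ∫ t : ℝ, Real.exp (t * x₀) * φ t := by
    rw [shift (fun t => Real.exp (t * x₀)), ← integral_const_mul]
    congr 1; funext t
    rw [add_mul, one_mul, Real.exp_add]; ring
  have e3 : (∫ t : ℝ, t * Real.exp (t * x₀) * φ (t - 1))
      = Real.exp x₀ * ((∫ t : ℝ, t * Real.exp (t * x₀) * φ t)
        + ∫ t : ℝ, Real.exp (t * x₀) * φ t) := by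
    rw [shift (fun t => t * Real.exp (t * x₀)),
      ← integral_add (hint (fun t => t * Real.exp (t * x₀)) (by fun_prop))
        (hint (fun t => Real.exp (t * x₀)) (by fun_prop)), ← integral_const_mul]
    congr 1; funext t
    rw [add_mul t 1 x₀, one_mul, Real.exp_add]; ring
  refine ⟨fun t => φ (t - 1), hφ.comp (contDiff_id.sub contDiff_const),
    hc.comp_homeomorph (Homeomorph.subRight (1 : ℝ)), ?_, ?_, ?_, ?_⟩
  · rw [integral_sub_right_eq_self φ (1 : ℝ), i0]
  · rw [shift (fun t => t)]
    simp only [add_mul, one_mul]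
    rw [integral_add (hint (fun t => t) continuous_id) (by simpa using hint (fun _ => 1) continuous_const),
      i0, i1, add_zero]
  · rw [e2]
    exact mul_ne_zero (Real.exp_pos _).ne' i2
  · rw [e2, e3, mul_div_mul_left _ _ (Real.exp_pos _).ne', add_div, div_self i2, h]
    simp
end

section
/- Let μ and ν be two probability measures on ℝ² whose exponential moments are everywhere finite, i.e. ∫ e^{s·a + t·ε} dμ(a, ε) < ∞ and ∫ e^{s·a + t·ε} dν(a, ε) < ∞ for all (s, t) ∈ ℝ² (in particular this holds if μ and ν are compactly supported). Suppose there is a nonempty open interval I ⊆ ℝ such that for every x ∈ I the pushforward of μ under the map (a, ε) ↦ a + ε·x equals the pushforward of ν under the same map. Then μ = ν. In particular, the conditional distribution of (a, ε) given the control variable, and hence the functionals E[e^{a + ε·x}] and E[ε·e^{a + ε·x}], are identified from the one-dimensional projections at slopes ranging over an interval. -/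
open Real MeasureTheory

/-!
The idea is to compare the two-variable Laplace transforms
`M(s, t) = ∫ exp (s a + t ε)`, which are finite on all of `ℝ²`.  Scaling the projection at slope `x`
by `s` shows that the transforms of `μ` and `ν` agree at `(s, s x)` for every `s` and every `x ∈ I`.
For fixed `s ≠ 0` these points fill an open interval of the line `{s} × ℝ`, and
`t ↦ M(s, t)` is real analytic (`analyticOnNhd_integral_exp_add_mul`), so the transforms agree on
that whole line.  For fixed `t`, continuity of `s ↦ M(s, t)` covers the remaining line `s = 0`
(`laplace_eq_of_projections`).

Equality of the transforms says that every linear functional has the same moment generating function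
under `μ` and `ν`.  As these are finite everywhere, they extend to entire functions that agree on the
real axis, hence also on the imaginary axis: the characteristic functions of `μ` and `ν` coincide
(`eq_of_laplace_eq`).
-/

open ProbabilityTheory in
/-- The Laplace transform in the direction `X`, weighted by `exp Y`, is real analytic: it is the
moment generating function of `X` under the measure with density `exp Y`. -/
lemma analyticOnNhd_integral_exp_add_mul {Ω : Type*} [MeasurableSpace Ω] {μ : Measure Ω}
    {X Y : Ω → ℝ} (hY : Measurable Y)
    (h : ∀ t : ℝ, Integrable (fun ω => Real.exp (Y ω + t * X ω)) μ) :
    AnalyticOnNhd ℝ (fun t : ℝ => ∫ ω, Real.exp (Y ω + t * X ω) ∂μ) Set.univ := by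
  have hmeas : Measurable fun ω => ENNReal.ofReal (Real.exp (Y ω)) := by fun_prop
  have hfin : ∀ᵐ ω ∂μ, ENNReal.ofReal (Real.exp (Y ω)) < ⊤ := by simp
  have hmgf : (fun t : ℝ => ∫ ω, Real.exp (Y ω + t * X ω) ∂μ)
      = mgf X (μ.withDensity fun ω => ENNReal.ofReal (Real.exp (Y ω))) := by
    funext t
    rw [mgf, integral_withDensity_eq_integral_toReal_smul hmeas hfin]
    simp [ENNReal.toReal_ofReal, Real.exp_nonneg, Real.exp_add]
  have hset : integrableExpSet X (μ.withDensity fun ω => ENNReal.ofReal (Real.exp (Y ω)))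
      = Set.univ := by
    refine Set.eq_univ_of_forall fun t => ?_
    rw [integrableExpSet, Set.mem_ofPred_eq,
      integrable_withDensity_iff_integrable_smul' hmeas hfin]
    simpa [ENNReal.toReal_ofReal, Real.exp_nonneg, Real.exp_add] using h t
  rw [hmgf]
  simpa [hset] using
    analyticOnNhd_mgf (X := X) (μ := μ.withDensity fun ω => ENNReal.ofReal (Real.exp (Y ω)))

lemma laplace_eq_of_projections {μ ν : Measure (ℝ × ℝ)}
    (hμ : ∀ s t : ℝ, Integrable (fun q : ℝ × ℝ => Real.exp (s * q.1 + t * q.2)) μ)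
    (hν : ∀ s t : ℝ, Integrable (fun q : ℝ × ℝ => Real.exp (s * q.1 + t * q.2)) ν)
    {I : Set ℝ} (hopen : IsOpen I) (hne : I.Nonempty)
    (hproj : ∀ x ∈ I,
      Measure.map (fun q : ℝ × ℝ => q.1 + q.2 * x) μ
        = Measure.map (fun q : ℝ × ℝ => q.1 + q.2 * x) ν) (s t : ℝ) :
    ∫ q : ℝ × ℝ, Real.exp (s * q.1 + t * q.2) ∂μ
      = ∫ q : ℝ × ℝ, Real.exp (s * q.1 + t * q.2) ∂ν := by
  have hcone : ∀ s : ℝ, ∀ x ∈ I, ∫ q : ℝ × ℝ, Real.exp (s * q.1 + (s * x) * q.2) ∂μ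
      = ∫ q : ℝ × ℝ, Real.exp (s * q.1 + (s * x) * q.2) ∂ν := by
    intro s x hx
    have key (ρ : Measure (ℝ × ℝ)) : ∫ q : ℝ × ℝ, Real.exp (s * q.1 + (s * x) * q.2) ∂ρ
        = ∫ y, Real.exp (s * y) ∂(ρ.map fun q : ℝ × ℝ => q.1 + q.2 * x) := by
      rw [integral_map (by fun_prop) (by fun_prop)]
      congr with q
      ring_nf
    rw [key, key, hproj x hx]
  have hoff : ∀ s : ℝ, s ≠ 0 → ∀ t : ℝ, ∫ q : ℝ × ℝ, Real.exp (s * q.1 + t * q.2) ∂μ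
      = ∫ q : ℝ × ℝ, Real.exp (s * q.1 + t * q.2) ∂ν := by
    intro s hs t
    obtain ⟨x₀, hx₀⟩ := hne
    refine congrFun (AnalyticOnNhd.eq_of_eventuallyEq (z₀ := s * x₀)
      (analyticOnNhd_integral_exp_add_mul (by fun_prop) (hμ s))
      (analyticOnNhd_integral_exp_add_mul (by fun_prop) (hν s)) ?_) t
    have hnhds : ∀ᶠ t in nhds (s * x₀), t / s ∈ I := by
      refine (continuous_id.div_const s).continuousAt.eventually_mem ?_
      simpa [mul_div_cancel_left₀ x₀ hs] using hopen.mem_nhds hx₀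
    filter_upwards [hnhds] with t ht
    simpa [mul_div_cancel₀ t hs] using hcone s (t / s) ht
  have hcont (ρ : Measure (ℝ × ℝ))
      (hρ : ∀ s t : ℝ, Integrable (fun q : ℝ × ℝ => Real.exp (s * q.1 + t * q.2)) ρ) :
      Continuous fun s : ℝ => ∫ q : ℝ × ℝ, Real.exp (s * q.1 + t * q.2) ∂ρ := by
    rw [← continuousOn_univ]
    simp only [add_comm _ (t * _)]
    exact (analyticOnNhd_integral_exp_add_mul (by fun_prop)
      fun s => by simpa only [add_comm] using hρ s t).continuousOn
  exact congrFun ((hcont μ hμ).ext_on (dense_compl_singleton (0 : ℝ)) (hcont ν hν)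
    fun s hs => hoff s hs t) s

open ProbabilityTheory in
/-- An everywhere finite Laplace transform determines a probability measure on `ℝ²`. -/
lemma eq_of_laplace_eq {μ ν : Measure (ℝ × ℝ)} [IsProbabilityMeasure μ] [IsProbabilityMeasure ν]
    (hμ : ∀ s t : ℝ, Integrable (fun q : ℝ × ℝ => Real.exp (s * q.1 + t * q.2)) μ)
    (h : ∀ s t : ℝ, ∫ q : ℝ × ℝ, Real.exp (s * q.1 + t * q.2) ∂μ
      = ∫ q : ℝ × ℝ, Real.exp (s * q.1 + t * q.2) ∂ν) :
    μ = ν := by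
  refine Measure.ext_of_charFunDual (funext fun L => ?_)
  obtain ⟨a, b, hL⟩ :
      ∃ a b : ℝ, ∀ (r : ℝ) (q : ℝ × ℝ), r * L q = (r * a) * q.1 + (r * b) * q.2 := by
    refine ⟨L (1, 0), L (0, 1), fun r q => ?_⟩
    have hq : q = q.1 • ((1, 0) : ℝ × ℝ) + q.2 • ((0, 1) : ℝ × ℝ) := by ext <;> simp
    conv_lhs => rw [hq, map_add, map_smul, map_smul, smul_eq_mul, smul_eq_mul]
    ring
  have hmgf : mgf L μ = mgf L ν := by
    funext r
    simpa only [mgf, hL] using h (r * a) (r * b)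
  have hset : integrableExpSet L μ = Set.univ := by
    refine Set.eq_univ_of_forall fun r => ?_
    simpa only [integrableExpSet, Set.mem_ofPred_eq, hL] using hμ (r * a) (r * b)
  have hmap : μ.map L = ν.map L := by
    refine Measure.ext_of_complexMGF_eq (by fun_prop) (by fun_prop) (funext fun z => ?_)
    exact eqOn_complexMGF_of_mgf hmgf (by simp [hset])
  rw [charFunDual_eq_charFun_map_one, charFunDual_eq_charFun_map_one, hmap]

/-- injectivity of line projections at an interval of slopes.
If `μ, ν` are probability measures on `ℝ²` with everywhere-finite exponential moments, and
their pushforwards under `(a, ε) ↦ a + ε x` agree for every `x` in some nonempty open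
interval `I`, then `μ = ν`; in particular the functionals `E[e^{a + ε x}]` and
`E[ε e^{a + ε x}]` agree for all `x`. -/
theorem stmt17 (μ ν : Measure (ℝ × ℝ)) [IsProbabilityMeasure μ] [IsProbabilityMeasure ν]
    (hμ : ∀ s t : ℝ, Integrable (fun q : ℝ × ℝ => Real.exp (s * q.1 + t * q.2)) μ)
    (hν : ∀ s t : ℝ, Integrable (fun q : ℝ × ℝ => Real.exp (s * q.1 + t * q.2)) ν)
    (I : Set ℝ) (hopen : IsOpen I) (hne : I.Nonempty) (hint : I.OrdConnected)
    (hproj : ∀ x ∈ I,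
      Measure.map (fun q : ℝ × ℝ => q.1 + q.2 * x) μ
        = Measure.map (fun q : ℝ × ℝ => q.1 + q.2 * x) ν) :
    μ = ν
    ∧ (∀ x : ℝ,
        (∫ q : ℝ × ℝ, Real.exp (q.1 + q.2 * x) ∂μ)
          = ∫ q : ℝ × ℝ, Real.exp (q.1 + q.2 * x) ∂ν)
    ∧ (∀ x : ℝ,
        (∫ q : ℝ × ℝ, q.2 * Real.exp (q.1 + q.2 * x) ∂μ)
          = ∫ q : ℝ × ℝ, q.2 * Real.exp (q.1 + q.2 * x) ∂ν) := by
  obtain rfl : μ = ν := eq_of_laplace_eq hμ (laplace_eq_of_projections hμ hν hopen hne hproj)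
  exact ⟨rfl, fun _ => rfl, fun _ => rfl⟩
end
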